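/- Local-to-global entropy contraction: Let s_0, …, s_{d−2} be reals with s_k ≥ 1, and suppose that for every 2 ≤ k ≤ d, every S ∈ 𝒞(k−2), and every g : 𝒞_S(2) → ℝ_{≥0}, one has Ent_{π_{S,2}}(g) ≥ s_{k−2} · Ent_{π_{S,1}}(P_{S,1}^↑ g). Define v_0 := s_0 and v_k := s_k − (s_k − 1)/v_{k−1}. Then for every 2 ≤ k ≤ d and every f^{(k)} : 𝒞(k) → ℝ_{≥0}, Ent_{π_k}(f^{(k)}) ≥ v_{k−2} · Ent_{π_{k−1}}(f^{(k−1)}). -/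

import Mathlib

/-!
Write `Ent_k` for the entropy at level `k`, let `m = k - 2`, and let `h = f^{(m+1)}`,
`e = f^{(m)}`. For an `m`-face `S`, the conditional distribution of an `(m+j)`-face given
that it contains `S` is `π_{S,j}`, so the chain rule for entropy gives
`Ent_{m+2}(f) - Ent_m(e) = E_{S ∼ π_m} Ent_{π_{S,2}}(f(S ∪ ·))` and
`Ent_{m+1}(h) - Ent_m(e) = E_{S ∼ π_m} Ent_{π_{S,1}}(h(S ∪ ·))`. Since `h(S ∪ ·)` is the
image of `f(S ∪ ·)` under the up operator of the link, averaging the local hypothesis gives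
`Ent_{m+2}(f) - Ent_m(e) ≥ s_m (Ent_{m+1}(h) - Ent_m(e))` (`ent_step`). For `m = 0` the term
`Ent_0(e)` vanishes; for `m > 0` it is at most `Ent_{m+1}(h) / v_{m-1}` by induction, and the
recursion for `v_m` drops out (`entLev_contraction`).

All averages are instances of one operator `avg`, with explicit binomial normalisation:
`π_k`-expectations are averages down to the empty face, `π_{S,j}`-expectations are averages
down to `S`, and up operators are averages down by one level. The only combinatorial input
is the tower property `avg_avg`, obtained by double counting chains `S ⊆ R ⊆ U`.
-/

open Finset

noncomputable section

variable {E : Type*} [Fintype E] [DecidableEq E]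

/-- The faces of cardinality `k` of the set family `C`. -/
def faces (C : Finset (Finset E)) (k : ℕ) : Finset (Finset E) :=
  C.filter fun S => S.card = k

/-- `C` is a pure simplicial complex of dimension `d`: it is nonempty, closed under
taking subsets, and every face is contained in a face of cardinality `d`
(hence all maximal faces have cardinality `d`). -/
def IsPureComplex (C : Finset (Finset E)) (d : ℕ) : Prop :=
  C.Nonempty ∧ (∀ S ∈ C, ∀ T ⊆ S, T ∈ C) ∧ (∀ S ∈ C, ∃ T ∈ C, S ⊆ T ∧ T.card = d)

/-- `pid` is a probability distribution with full support on the top level faces. -/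
def IsTopDist (C : Finset (Finset E)) (d : ℕ) (pid : Finset E → ℝ) : Prop :=
  (∀ T ∈ faces C d, 0 < pid T) ∧ ∑ T ∈ faces C d, pid T = 1

/-- The (unnormalised) weight of a face: total top-level mass above it. -/
def wgt (C : Finset (Finset E)) (d : ℕ) (pid : Finset E → ℝ) (S : Finset E) : ℝ :=
  ∑ T ∈ (faces C d).filter (fun T => S ⊆ T), pid T

/-- The distribution `π_k` at level `k`: `π_k(S) ∝ Σ_{T ∈ C(d), T ⊇ S} π_d(T)`. -/
def piLev (C : Finset (Finset E)) (d : ℕ) (pid : Finset E → ℝ) (k : ℕ) (S : Finset E) : ℝ :=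
  if S ∈ faces C k then wgt C d pid S / ∑ T ∈ faces C k, wgt C d pid T else 0

/-- The level-`k` faces of the link of the face `S`. -/
def linkFaces (C : Finset (Finset E)) (S : Finset E) (k : ℕ) : Finset (Finset E) :=
  Finset.univ.powerset.filter fun T => S ∩ T = ∅ ∧ S ∪ T ∈ C ∧ T.card = k

/-- The distribution `π_{S,k}` on the level-`k` faces of the link of `S`:
`π_{S,k}(T) ∝ π_{|S|+k}(S ∪ T)`. -/
def linkPi (C : Finset (Finset E)) (d : ℕ) (pid : Finset E → ℝ) (S : Finset E) (k : ℕ)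
    (T : Finset E) : ℝ :=
  if T ∈ linkFaces C S k then
    piLev C d pid (S.card + k) (S ∪ T) /
      ∑ T' ∈ linkFaces C S k, piLev C d pid (S.card + k) (S ∪ T')
  else 0

/-- Generic up operator with respect to a measure `ν` on a collection `dom` of faces:
from `R` move to a superset `T ∈ dom` with probability proportional to `ν T`.
Acts on functions on `dom`, producing a function on the level below. -/
def upWith (ν : Finset E → ℝ) (dom : Finset (Finset E)) (f : Finset E → ℝ) (R : Finset E) : ℝ :=
  ∑ T ∈ dom.filter (fun T => R ⊆ T),
    (ν T / ∑ T' ∈ dom.filter (fun T' => R ⊆ T'), ν T') * f T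

/-- The up operator `P_k^↑`, acting on functions on `C(k+1)` and producing a function
on `C(k)`. -/
def upOp (C : Finset (Finset E)) (d : ℕ) (pid : Finset E → ℝ) (k : ℕ) :
    (Finset E → ℝ) → Finset E → ℝ :=
  upWith (piLev C d pid (k+1)) (faces C (k+1))

/-- The down operator `P_k^↓` (uniform removal of an element), acting on functions
on `C(k-1)` and producing a function on `C(k)`. -/
def downOp (k : ℕ) (g : Finset E → ℝ) (S : Finset E) : ℝ :=
  (1 / (k : ℝ)) * ∑ i ∈ S, g (S.erase i)

/-- The down-up walk `P_k^∨ = P_k^↓ P_{k-1}^↑` on `C(k)`, as an operator on functions. -/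
def downUp (C : Finset (Finset E)) (d : ℕ) (pid : Finset E → ℝ) (k : ℕ)
    (f : Finset E → ℝ) : Finset E → ℝ :=
  downOp k (upOp C d pid (k-1) f)

/-- The up-down walk `P_k^∧ = P_k^↑ P_{k+1}^↓` on `C(k)`, as an operator on functions. -/
def upDown (C : Finset (Finset E)) (d : ℕ) (pid : Finset E → ℝ) (k : ℕ)
    (f : Finset E → ℝ) : Finset E → ℝ :=
  upOp C d pid k (downOp (k+1) f)

/-- The up operator `P_{S,k}^↑` on the link of `S`, acting on functions on `C_S(k+1)`
and producing a function on `C_S(k)`. -/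
def linkUp (C : Finset (Finset E)) (d : ℕ) (pid : Finset E → ℝ) (S : Finset E) (k : ℕ) :
    (Finset E → ℝ) → Finset E → ℝ :=
  upWith (linkPi C d pid S (k+1)) (linkFaces C S (k+1))

/-- The up-down walk `P_{S,k}^∧` on the level-`k` faces of the link of `S`. -/
def linkUpDown (C : Finset (Finset E)) (d : ℕ) (pid : Finset E → ℝ) (S : Finset E) (k : ℕ)
    (f : Finset E → ℝ) : Finset E → ℝ :=
  linkUp C d pid S k (downOp (k+1) f)

/-- The local walk `G_S := 2 P_{S,1}^∧ - I` on the vertices of the link of `S`. -/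
def localWalk (C : Finset (Finset E)) (d : ℕ) (pid : Finset E → ℝ) (S : Finset E)
    (f : Finset E → ℝ) (T : Finset E) : ℝ :=
  2 * linkUpDown C d pid S 1 f T - f T

/-- Variance of `f` with respect to the measure `μ` on `dom`. -/
def pVar (μ : Finset E → ℝ) (dom : Finset (Finset E)) (f : Finset E → ℝ) : ℝ :=
  (∑ x ∈ dom, μ x * f x ^ 2) - (∑ x ∈ dom, μ x * f x) ^ 2

/-- Relative entropy `Ent_μ(f) = E_μ[f log f] - E_μ[f] log E_μ[f]` of `f` with respect to
the measure `μ` on `dom` (note `Real.log 0 = 0`, giving the convention `0 log 0 = 0`). -/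
def pEnt (μ : Finset E → ℝ) (dom : Finset (Finset E)) (f : Finset E → ℝ) : ℝ :=
  (∑ x ∈ dom, μ x * (f x * Real.log (f x))) -
    (∑ x ∈ dom, μ x * f x) * Real.log (∑ x ∈ dom, μ x * f x)

/-- The Dirichlet form `𝔈_P(f,g) = Σ_x μ(x) f(x) ((I - P) g)(x)` of a Markov operator `P`
reversible with respect to `μ` on `dom`. -/
def pDiri (μ : Finset E → ℝ) (dom : Finset (Finset E))
    (P : (Finset E → ℝ) → Finset E → ℝ) (f g : Finset E → ℝ) : ℝ :=
  ∑ x ∈ dom, μ x * f x * (g x - P g x)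

/-- The second largest eigenvalue of a Markov operator `P` reversible with respect to the
distribution `μ` on `dom`, via the variational characterisation: the supremum of Rayleigh
quotients `⟨f, Pf⟩_μ / ⟨f, f⟩_μ` over `f` orthogonal to the constants in `L²(μ)`. -/
noncomputable def lamTwo (μ : Finset E → ℝ) (dom : Finset (Finset E))
    (P : (Finset E → ℝ) → Finset E → ℝ) : ℝ :=
  sSup {r : ℝ | ∃ f : Finset E → ℝ,
    (∑ x ∈ dom, μ x * f x = 0) ∧ (∑ x ∈ dom, μ x * f x ^ 2 ≠ 0) ∧
    r = (∑ x ∈ dom, μ x * f x * P f x) / ∑ x ∈ dom, μ x * f x ^ 2}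

/-- The modified log-Sobolev constant `ρ(P)` of a Markov operator `P` reversible with
respect to `μ` on `dom`. -/
noncomputable def mlsConst (μ : Finset E → ℝ) (dom : Finset (Finset E))
    (P : (Finset E → ℝ) → Finset E → ℝ) : ℝ :=
  sInf {r : ℝ | ∃ f : Finset E → ℝ, (∀ x ∈ dom, 0 < f x) ∧ pEnt μ dom f ≠ 0 ∧
    r = pDiri μ dom P f (fun x => Real.log (f x)) / pEnt μ dom f}

/-- The sequence `v_k` built from contraction factors `s_k`: `v_0 = s_0` and
`v_k = s_k - (s_k - 1)/v_{k-1}`. -/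
noncomputable def vOfS (s : ℕ → ℝ) : ℕ → ℝ
  | 0 => s 0
  | k + 1 => s (k+1) - (s (k+1) - 1) / vOfS s k

/-- The averaging operator from level `m + j` to level `m`: the mean of `F` over the
`(m + j)`-faces containing `S`, weighted by `wgt`. The normalisation is
`Nat.choose (d - m) j * wgt S`, the total weight of those faces when `S` is an `m`-face. -/
def avg (C : Finset (Finset E)) (d : ℕ) (pid : Finset E → ℝ) (m j : ℕ)
    (F : Finset E → ℝ) (S : Finset E) : ℝ :=
  (∑ U ∈ (faces C (m + j)).filter (fun U => S ⊆ U), wgt C d pid U * F U) /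
    (((d - m).choose j : ℝ) * wgt C d pid S)

/-- The entropy of `F` at level `k`, expressed by averaging down to the empty face. -/
def entLev (C : Finset (Finset E)) (d : ℕ) (pid : Finset E → ℝ) (k : ℕ)
    (F : Finset E → ℝ) : ℝ :=
  avg C d pid 0 k (fun T => F T * Real.log (F T)) ∅ -
    avg C d pid 0 k F ∅ * Real.log (avg C d pid 0 k F ∅)

/-! ### Weighted averages and double counting -/

set_option linter.unusedSectionVars false

section Counting

variable {C : Finset (Finset E)} {d : ℕ} {pid : Finset E → ℝ}

lemma mem_faces {k : ℕ} {S : Finset E} : S ∈ faces C k ↔ S ∈ C ∧ S.card = k := by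
  simp [faces]

lemma wgt_pos (hC : IsPureComplex C d) (hpid : IsTopDist C d pid) {S : Finset E}
    (hS : S ∈ C) : 0 < wgt C d pid S := by
  obtain ⟨T, hT, hST, hTd⟩ := hC.2.2 S hS
  refine Finset.sum_pos (fun U hU => hpid.1 U (Finset.mem_filter.1 hU).1) ⟨T, ?_⟩
  simp [mem_faces, hT, hST, hTd]

/-- In a complex, the faces of cardinality `m + i` between `S` and a face `U` with
`|U \ S| = n` are counted by `Nat.choose n i`. -/
lemma card_between (hC : IsPureComplex C d) {S U : Finset E} {m n i : ℕ} (hU : U ∈ C)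
    (hSU : S ⊆ U) (hS : S.card = m) (hUc : U.card = m + n) :
    (((faces C (m + i)).filter (fun R => S ⊆ R)).filter (fun R => R ⊆ U)).card
      = n.choose i := by
  have hn : (U \ S).card = n := by rw [Finset.card_sdiff_of_subset hSU]; omega
  rw [← hn, ← Finset.card_powersetCard]
  symm
  refine Finset.card_bij (fun R _ => S ∪ R) ?_ ?_ ?_
  · intro R hR
    rw [Finset.mem_powersetCard] at hR
    have hsub : S ∪ R ⊆ U := Finset.union_subset hSU (hR.1.trans Finset.sdiff_subset)
    have hdis : Disjoint S R := Finset.disjoint_of_subset_right hR.1 Finset.disjoint_sdiff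
    simp only [Finset.mem_filter, mem_faces]
    exact ⟨⟨⟨hC.2.1 U hU _ hsub, by rw [Finset.card_union_of_disjoint hdis, hS, hR.2]⟩,
      Finset.subset_union_left⟩, hsub⟩
  · intro R hR R' hR' h
    rw [Finset.mem_powersetCard] at hR hR'
    have h1 : Disjoint S R := Finset.disjoint_of_subset_right hR.1 Finset.disjoint_sdiff
    have h2 : Disjoint S R' := Finset.disjoint_of_subset_right hR'.1 Finset.disjoint_sdiff
    rw [← Finset.union_sdiff_cancel_left h1, h, Finset.union_sdiff_cancel_left h2]
  · intro R hR
    simp only [Finset.mem_filter, mem_faces] at hR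
    refine ⟨R \ S, ?_, Finset.union_sdiff_of_subset hR.1.2⟩
    rw [Finset.mem_powersetCard, Finset.card_sdiff_of_subset hR.1.2]
    exact ⟨Finset.sdiff_subset_sdiff hR.2 le_rfl, by omega⟩

/-- Double counting of chains `S ⊆ R ⊆ U`: each `U` is counted once per intermediate `R`. -/
lemma sum_chain (hC : IsPureComplex C d) {S : Finset E} {m n i : ℕ} (hS : S.card = m)
    (G : Finset E → ℝ) :
    ∑ R ∈ (faces C (m + i)).filter (fun R => S ⊆ R),
        ∑ U ∈ (faces C (m + n)).filter (fun U => R ⊆ U), G U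
      = (n.choose i : ℝ) * ∑ U ∈ (faces C (m + n)).filter (fun U => S ⊆ U), G U := by
  rw [Finset.sum_comm' (t' := (faces C (m + n)).filter (fun U => S ⊆ U))
    (s' := fun U => ((faces C (m + i)).filter (fun R => S ⊆ R)).filter (fun R => R ⊆ U))]
  · rw [Finset.mul_sum]
    refine Finset.sum_congr rfl fun U hU => ?_
    simp only [Finset.mem_filter, mem_faces] at hU
    rw [Finset.sum_const, card_between hC hU.1.1 hU.2 hS hU.1.2, nsmul_eq_mul]
  · intro R U
    simp only [Finset.mem_filter]
    constructor
    · rintro ⟨⟨h1, h2⟩, h3, h4⟩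
      exact ⟨⟨⟨h1, h2⟩, h4⟩, h3, h2.trans h4⟩
    · rintro ⟨⟨⟨h1, h2⟩, h4⟩, h3, -⟩
      exact ⟨⟨h1, h2⟩, h3, h4⟩

lemma sum_wgt (hC : IsPureComplex C d) {S : Finset E} {m j : ℕ} (hS : S.card = m)
    (hm : m ≤ d) :
    ∑ U ∈ (faces C (m + j)).filter (fun U => S ⊆ U), wgt C d pid U
      = ((d - m).choose j : ℝ) * wgt C d pid S := by
  have h := sum_chain hC (n := d - m) (i := j) hS pid
  rw [show m + (d - m) = d by omega] at h
  exact h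

lemma avg_congr {m j : ℕ} {F G : Finset E → ℝ} (S : Finset E)
    (h : ∀ U ∈ faces C (m + j), F U = G U) :
    avg C d pid m j F S = avg C d pid m j G S := by
  unfold avg
  congr 1
  exact Finset.sum_congr rfl fun U hU => by rw [h U (Finset.mem_filter.1 hU).1]

/-- The tower property: averaging down in two stages is averaging down at once. -/
lemma avg_avg (hC : IsPureComplex C d) (hpid : IsTopDist C d pid) {S : Finset E}
    {m i j : ℕ} (hS : S ∈ faces C m) (hd : m + i + j ≤ d) (F : Finset E → ℝ) :
    avg C d pid m i (avg C d pid (m + i) j F) S = avg C d pid m (i + j) F S := by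
  rw [mem_faces] at hS
  have hw := wgt_pos hC hpid hS.1
  have hch : ((d - m).choose (i + j) : ℝ) * ((i + j).choose i : ℝ)
      = ((d - m).choose i : ℝ) * ((d - (m + i)).choose j : ℝ) := by
    have := Nat.choose_mul (n := d - m) (k := i + j) (s := i) (by omega)
    rw [show d - m - i = d - (m + i) by omega, show i + j - i = j by omega] at this
    exact_mod_cast this
  have p1 : (0 : ℝ) < ((d - m).choose (i + j) : ℝ) := by
    exact_mod_cast Nat.choose_pos (by omega)
  have p2 : (0 : ℝ) < ((d - m).choose i : ℝ) := by
    exact_mod_cast Nat.choose_pos (by omega)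
  have p3 : (0 : ℝ) < ((d - (m + i)).choose j : ℝ) := by
    exact_mod_cast Nat.choose_pos (by omega)
  have key : ∑ R ∈ (faces C (m + i)).filter (fun R => S ⊆ R),
        wgt C d pid R * avg C d pid (m + i) j F R
      = ((i + j).choose i : ℝ) *
        (∑ U ∈ (faces C (m + (i + j))).filter (fun U => S ⊆ U), wgt C d pid U * F U) /
          ((d - (m + i)).choose j : ℝ) := by
    rw [← sum_chain hC hS.2, Finset.sum_div]
    refine Finset.sum_congr rfl fun R hR => ?_
    have hR' := wgt_pos hC hpid (mem_faces.1 (Finset.mem_filter.1 hR).1).1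
    unfold avg
    rw [add_assoc]
    field_simp
  unfold avg at key ⊢
  rw [key]
  rw [div_div, div_eq_div_iff (by positivity) (by positivity)]
  linear_combination (wgt C d pid S *
    ∑ U ∈ (faces C (m + (i + j))).filter (fun U => S ⊆ U), wgt C d pid U * F U) * hch

lemma empty_mem (hC : IsPureComplex C d) : (∅ : Finset E) ∈ faces C 0 := by
  obtain ⟨S, hS⟩ := hC.1
  exact mem_faces.2 ⟨hC.2.1 S hS _ (Finset.empty_subset _), rfl⟩

lemma entLev_congr {k : ℕ} {F G : Finset E → ℝ} (h : ∀ U ∈ faces C k, F U = G U) :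
    entLev C d pid k F = entLev C d pid k G := by
  have h' : ∀ U ∈ faces C (0 + k), F U = G U := by simpa using h
  unfold entLev
  rw [avg_congr ∅ h', avg_congr (F := fun T => F T * Real.log (F T)) ∅
    (fun U hU => by rw [h' U hU])]

lemma entLev_zero (hC : IsPureComplex C d) (hpid : IsTopDist C d pid)
    (F : Finset E → ℝ) : entLev C d pid 0 F = 0 := by
  have hw := wgt_pos hC hpid (mem_faces.1 (empty_mem hC)).1
  have h : (faces C 0).filter (fun U => ∅ ⊆ U) = {∅} := by
    ext U
    simp only [Finset.mem_filter, mem_faces, Finset.card_eq_zero, Finset.mem_singleton,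
      Finset.empty_subset, and_true]
    exact ⟨fun h => h.2, fun h => ⟨h ▸ (mem_faces.1 (empty_mem hC)).1, h⟩⟩
  have hav : ∀ G : Finset E → ℝ, avg C d pid 0 0 G ∅ = G ∅ := by
    intro G
    simp only [avg, add_zero, h, Finset.sum_singleton, Nat.choose_zero_right, Nat.cast_one]
    field_simp
  simp [entLev, hav]

lemma avg_nonneg (hC : IsPureComplex C d) (hpid : IsTopDist C d pid) {m j : ℕ}
    {F : Finset E → ℝ} {S : Finset E} (hS : S ∈ C) (hF : ∀ U ∈ faces C (m + j), 0 ≤ F U) :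
    0 ≤ avg C d pid m j F S := by
  refine div_nonneg (Finset.sum_nonneg fun U hU => ?_)
    (mul_nonneg (Nat.cast_nonneg _) (wgt_pos hC hpid hS).le)
  have hU' := (Finset.mem_filter.1 hU).1
  exact mul_nonneg (wgt_pos hC hpid (mem_faces.1 hU').1).le (hF U hU')

lemma avg_sub (m j : ℕ) (F G : Finset E → ℝ) (S : Finset E) :
    avg C d pid m j (fun U => F U - G U) S = avg C d pid m j F S - avg C d pid m j G S := by
  simp only [avg, mul_sub, Finset.sum_sub_distrib, sub_div]

lemma avg_smul (m j : ℕ) (a : ℝ) (F : Finset E → ℝ) (S : Finset E) :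
    avg C d pid m j (fun U => a * F U) S = a * avg C d pid m j F S := by
  simp only [avg, mul_left_comm _ a, ← Finset.mul_sum, mul_div_assoc]

end Counting

/-! ### Levels, links and up operators as weighted averages -/

section Translation

variable {C : Finset (Finset E)} {d : ℕ} {pid : Finset E → ℝ}

/-- Up operators only see the measure up to a constant factor. -/
lemma upWith_eq {ν μ : Finset E → ℝ} {dom : Finset (Finset E)} {c : ℝ} (hc : c ≠ 0)
    (h : ∀ T ∈ dom, ν T = μ T / c) (f : Finset E → ℝ) (R : Finset E) :
    upWith ν dom f R = (∑ T ∈ dom.filter (fun T => R ⊆ T), μ T * f T) /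
      ∑ T ∈ dom.filter (fun T => R ⊆ T), μ T := by
  have h1 : ∑ T ∈ dom.filter (fun T => R ⊆ T), ν T
      = (∑ T ∈ dom.filter (fun T => R ⊆ T), μ T) / c := by
    rw [Finset.sum_div]
    exact Finset.sum_congr rfl fun T hT => h T (Finset.mem_filter.1 hT).1
  unfold upWith
  rw [h1, Finset.sum_div (f := fun T => μ T * f T)]
  refine Finset.sum_congr rfl fun T hT => ?_
  rw [h T (Finset.mem_filter.1 hT).1, div_div_div_cancel_right₀ hc]
  ring

/-- `T ↦ S ∪ T` identifies the faces of the link of `S` containing `T₀` with the faces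
of the complex containing `S ∪ T₀`. -/
lemma sum_link {S T₀ : Finset E} {m j : ℕ} (hS : S.card = m) (hT₀ : S ∩ T₀ = ∅)
    (G : Finset E → ℝ) :
    ∑ T ∈ (linkFaces C S j).filter (fun T => T₀ ⊆ T), G (S ∪ T)
      = ∑ U ∈ (faces C (m + j)).filter (fun U => S ∪ T₀ ⊆ U), G U := by
  refine Finset.sum_bij (fun T _ => S ∪ T) ?_ ?_ ?_ (fun _ _ => rfl)
  · intro T hT
    simp only [linkFaces, Finset.mem_filter] at hT
    obtain ⟨⟨-, h1, h2, h3⟩, h4⟩ := hT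
    simp only [Finset.mem_filter, mem_faces]
    exact ⟨⟨h2, by rw [Finset.card_union_of_disjoint (Finset.disjoint_iff_inter_eq_empty.2 h1),
      hS, h3]⟩, Finset.union_subset_union le_rfl h4⟩
  · intro T hT T' hT' h
    simp only [linkFaces, Finset.mem_filter] at hT hT'
    have h1 := Finset.disjoint_iff_inter_eq_empty.2 hT.1.2.1
    have h2 := Finset.disjoint_iff_inter_eq_empty.2 hT'.1.2.1
    rw [← Finset.union_sdiff_cancel_left h1, h, Finset.union_sdiff_cancel_left h2]
  · intro U hU
    simp only [Finset.mem_filter, mem_faces] at hU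
    obtain ⟨⟨h1, h2⟩, h3⟩ := hU
    have hSU : S ⊆ U := Finset.subset_union_left.trans h3
    refine ⟨U \ S, ?_, Finset.union_sdiff_of_subset hSU⟩
    simp only [linkFaces, Finset.mem_filter, Finset.powerset_univ, Finset.mem_univ, true_and]
    refine ⟨⟨Finset.inter_sdiff_self _ _, by rwa [Finset.union_sdiff_of_subset hSU], ?_⟩, ?_⟩
    · rw [Finset.card_sdiff_of_subset hSU]; omega
    · rw [Finset.subset_sdiff]
      exact ⟨Finset.subset_union_right.trans h3,
        (Finset.disjoint_iff_inter_eq_empty.2 hT₀).symm⟩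

lemma sum_link_all {S : Finset E} {m j : ℕ} (hS : S.card = m) (G : Finset E → ℝ) :
    ∑ T ∈ linkFaces C S j, G (S ∪ T)
      = ∑ U ∈ (faces C (m + j)).filter (fun U => S ⊆ U), G U := by
  simpa using sum_link (C := C) (T₀ := ∅) (j := j) hS (by simp) G

lemma union_mem_faces {S T : Finset E} {m j : ℕ} (hS : S.card = m)
    (hT : T ∈ linkFaces C S j) : S ∪ T ∈ faces C (m + j) := by
  simp only [linkFaces, Finset.mem_filter] at hT
  obtain ⟨-, h1, h2, h3⟩ := hT
  exact mem_faces.2 ⟨h2, by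
    rw [Finset.card_union_of_disjoint (Finset.disjoint_iff_inter_eq_empty.2 h1), hS, h3]⟩

lemma sum_wgt_level (hC : IsPureComplex C d) (k : ℕ) :
    ∑ T ∈ faces C k, wgt C d pid T = (d.choose k : ℝ) * wgt C d pid ∅ := by
  simpa using sum_wgt (pid := pid) hC (S := ∅) (m := 0) (j := k) rfl (Nat.zero_le _)

lemma piLev_eq (hC : IsPureComplex C d) {k : ℕ} {S : Finset E} (hS : S ∈ faces C k) :
    piLev C d pid k S = wgt C d pid S / ((d.choose k : ℝ) * wgt C d pid ∅) := by
  rw [piLev, if_pos hS, sum_wgt_level hC]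

lemma level_const_pos (hC : IsPureComplex C d) (hpid : IsTopDist C d pid) {k : ℕ}
    (hk : k ≤ d) : 0 < (d.choose k : ℝ) * wgt C d pid ∅ :=
  mul_pos (by exact_mod_cast Nat.choose_pos hk)
    (wgt_pos hC hpid (mem_faces.1 (empty_mem hC)).1)

lemma sum_piLev (hC : IsPureComplex C d) (k : ℕ) (F : Finset E → ℝ) :
    ∑ T ∈ faces C k, piLev C d pid k T * F T = avg C d pid 0 k F ∅ := by
  simp only [avg, zero_add, Nat.sub_zero, Finset.empty_subset, Finset.filter_true,
    Finset.sum_div]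
  refine Finset.sum_congr rfl fun T hT => ?_
  rw [piLev_eq hC hT]
  ring

lemma pEnt_piLev (hC : IsPureComplex C d) (k : ℕ) (F : Finset E → ℝ) :
    pEnt (piLev C d pid k) (faces C k) F = entLev C d pid k F := by
  rw [pEnt, entLev, sum_piLev hC k (fun T => F T * Real.log (F T)), sum_piLev hC k F]

lemma upOp_eq (hC : IsPureComplex C d) (hpid : IsTopDist C d pid) {k : ℕ} (hk : k + 1 ≤ d)
    (F : Finset E → ℝ) {S : Finset E} (hS : S ∈ faces C k) :
    upOp C d pid k F S = avg C d pid k 1 F S := by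
  rw [upOp, upWith_eq (level_const_pos hC hpid hk).ne' (fun T hT => piLev_eq hC hT),
    sum_wgt hC (mem_faces.1 hS).2 (by omega), avg]

lemma linkPi_eq (hC : IsPureComplex C d) (hpid : IsTopDist C d pid) {m j : ℕ}
    (hmj : m + j ≤ d) {S T : Finset E} (hS : S ∈ faces C m) (hT : T ∈ linkFaces C S j) :
    linkPi C d pid S j T = wgt C d pid (S ∪ T) / (((d - m).choose j : ℝ) * wgt C d pid S) := by
  have hc := level_const_pos hC hpid hmj
  have hSm := (mem_faces.1 hS).2
  rw [linkPi, if_pos hT, hSm, sum_link_all hSm, piLev_eq hC (union_mem_faces hSm hT),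
    Finset.sum_congr rfl (fun U hU => piLev_eq hC (Finset.mem_filter.1 hU).1),
    ← Finset.sum_div, sum_wgt hC hSm (by omega), div_div_div_cancel_right₀ hc.ne']

lemma sum_linkPi (hC : IsPureComplex C d) (hpid : IsTopDist C d pid) {m j : ℕ}
    (hmj : m + j ≤ d) {S : Finset E} (hS : S ∈ faces C m) (F : Finset E → ℝ) :
    ∑ T ∈ linkFaces C S j, linkPi C d pid S j T * F (S ∪ T) = avg C d pid m j F S := by
  rw [avg, ← sum_link_all (mem_faces.1 hS).2 (fun U => wgt C d pid U * F U), Finset.sum_div]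
  refine Finset.sum_congr rfl fun T hT => ?_
  rw [linkPi_eq hC hpid hmj hS hT]
  ring

lemma pEnt_linkPi (hC : IsPureComplex C d) (hpid : IsTopDist C d pid) {m j : ℕ}
    (hmj : m + j ≤ d) {S : Finset E} (hS : S ∈ faces C m) {g F : Finset E → ℝ}
    (hg : ∀ T ∈ linkFaces C S j, g T = F (S ∪ T)) :
    pEnt (linkPi C d pid S j) (linkFaces C S j) g =
      avg C d pid m j (fun T => F T * Real.log (F T)) S -
        avg C d pid m j F S * Real.log (avg C d pid m j F S) := by
  rw [pEnt, ← sum_linkPi hC hpid hmj hS, ← sum_linkPi hC hpid hmj hS]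
  have h1 : ∑ T ∈ linkFaces C S j, linkPi C d pid S j T * g T
      = ∑ T ∈ linkFaces C S j, linkPi C d pid S j T * F (S ∪ T) :=
    Finset.sum_congr rfl fun T hT => by rw [hg T hT]
  have h2 : ∑ T ∈ linkFaces C S j, linkPi C d pid S j T * (g T * Real.log (g T))
      = ∑ T ∈ linkFaces C S j, linkPi C d pid S j T * (F (S ∪ T) * Real.log (F (S ∪ T))) :=
    Finset.sum_congr rfl fun T hT => by rw [hg T hT]
  rw [h1, h2]

/-- The up operator of the link of `S` is the restriction of the global one. -/
lemma linkUp_eq (hC : IsPureComplex C d) (hpid : IsTopDist C d pid) {m : ℕ}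
    (hm : m + 2 ≤ d) {S T : Finset E} (hS : S ∈ faces C m) (hT : T ∈ linkFaces C S 1)
    (F : Finset E → ℝ) :
    linkUp C d pid S 1 (fun T => F (S ∪ T)) T = avg C d pid (m + 1) 1 F (S ∪ T) := by
  have hS' := mem_faces.1 hS
  have hc : 0 < ((d - m).choose 2 : ℝ) * wgt C d pid S :=
    mul_pos (by exact_mod_cast Nat.choose_pos (by omega)) (wgt_pos hC hpid hS'.1)
  have hdis : S ∩ T = ∅ := by
    simp only [linkFaces, Finset.mem_filter] at hT
    exact hT.2.1
  rw [linkUp, upWith_eq (μ := fun T => wgt C d pid (S ∪ T)) hc.ne'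
      (fun T hT => linkPi_eq hC hpid hm hS hT),
    sum_link hS'.2 hdis (fun U => wgt C d pid U * F U), sum_link hS'.2 hdis (wgt C d pid),
    avg, ← sum_wgt hC (mem_faces.1 (union_mem_faces hS'.2 hT)).2 (by omega)]

end Translation

/-! ### Entropy contraction -/

section Contraction

variable {C : Finset (Finset E)} {d : ℕ} {pid : Finset E → ℝ}

/-- Averaging the local contraction at level `m` over all `m`-faces. By the chain rule,
`Ent_{m+j} - Ent_m` is the mean of the entropies over the links of the `m`-faces. -/
lemma ent_step (hC : IsPureComplex C d) (hpid : IsTopDist C d pid) {m : ℕ}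
    (hm : m + 2 ≤ d) {a : ℝ}
    (hloc : ∀ S ∈ faces C m, ∀ g : Finset E → ℝ, (∀ T ∈ linkFaces C S 2, 0 ≤ g T) →
      pEnt (linkPi C d pid S 2) (linkFaces C S 2) g ≥
        a * pEnt (linkPi C d pid S 1) (linkFaces C S 1) (linkUp C d pid S 1 g))
    {f : Finset E → ℝ} (hf : ∀ S ∈ faces C (m + 2), 0 ≤ f S) :
    a * (entLev C d pid (m + 1) (avg C d pid (m + 1) 1 f) -
        entLev C d pid m (avg C d pid m 1 (avg C d pid (m + 1) 1 f)))
      ≤ entLev C d pid (m + 2) f -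
        entLev C d pid m (avg C d pid m 1 (avg C d pid (m + 1) 1 f)) := by
  set h := avg C d pid (m + 1) 1 f with hh
  set e := avg C d pid m 1 h with he
  have hempty := empty_mem hC
  have tower : ∀ {j : ℕ} (_ : m + j ≤ d) (F : Finset E → ℝ),
      avg C d pid 0 m (avg C d pid m j F) ∅ = avg C d pid 0 (m + j) F ∅ := by
    intro j hj F
    have := avg_avg hC hpid (m := 0) (i := m) (j := j) hempty (by omega) F
    simpa using this
  have he2 : ∀ S ∈ faces C m, avg C d pid m 2 f S = e S := fun S hS =>
    (avg_avg hC hpid (i := 1) (j := 1) hS (by omega) f).symm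
  have hlocal : ∀ S ∈ faces C m,
      0 ≤ (avg C d pid m 2 (fun T => f T * Real.log (f T)) S - e S * Real.log (e S)) -
        a * (avg C d pid m 1 (fun T => h T * Real.log (h T)) S - e S * Real.log (e S)) := by
    intro S hS
    have := hloc S hS (fun T => f (S ∪ T))
      (fun T hT => hf _ (union_mem_faces (mem_faces.1 hS).2 hT))
    rw [pEnt_linkPi hC hpid hm hS (F := f) (fun _ _ => rfl),
      pEnt_linkPi hC hpid (by omega) hS (F := h)
        (fun T hT => linkUp_eq hC hpid hm hS hT f), he2 S hS] at this
    linarith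
  have hsum := avg_nonneg hC hpid (m := 0) (j := m) (mem_faces.1 hempty).1
    (fun S hS => hlocal S (by simpa using hS))
  rw [avg_sub, avg_smul, avg_sub, avg_sub, tower hm, tower (by omega)] at hsum
  have mean1 : avg C d pid 0 m e ∅ = avg C d pid 0 (m + 1) h ∅ := tower (by omega) h
  have mean2 : avg C d pid 0 m e ∅ = avg C d pid 0 (m + 2) f ∅ := by
    rw [← tower hm f]
    exact avg_congr ∅ (by simpa using fun S hS => (he2 S hS).symm)
  unfold entLev
  rw [← mean1, ← mean2]
  linarith

/-- The factors `v_k` stay at least `1`, so that dividing by them is harmless. -/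
lemma one_le_vOfS {s : ℕ → ℝ} : ∀ m : ℕ, (∀ j ≤ m, 1 ≤ s j) → 1 ≤ vOfS s m
  | 0, hs => by simpa [vOfS] using hs 0 le_rfl
  | m + 1, hs => by
    have ih := one_le_vOfS m (fun j hj => hs j (by omega))
    have h1 := hs (m + 1) le_rfl
    have : (s (m + 1) - 1) / vOfS s m ≤ s (m + 1) - 1 :=
      div_le_self (by linarith) ih
    simp only [vOfS]
    linarith

lemma entLev_contraction (hC : IsPureComplex C d) (hpid : IsTopDist C d pid)
    {s : ℕ → ℝ} (hs : ∀ j ≤ d - 2, 1 ≤ s j)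
    (hloc : ∀ m, m + 2 ≤ d → ∀ S ∈ faces C m, ∀ g : Finset E → ℝ,
      (∀ T ∈ linkFaces C S 2, 0 ≤ g T) →
      pEnt (linkPi C d pid S 2) (linkFaces C S 2) g ≥
        s m * pEnt (linkPi C d pid S 1) (linkFaces C S 1) (linkUp C d pid S 1 g))
    (m : ℕ) : m + 2 ≤ d → ∀ f : Finset E → ℝ, (∀ S ∈ faces C (m + 2), 0 ≤ f S) →
    vOfS s m * entLev C d pid (m + 1) (avg C d pid (m + 1) 1 f) ≤ entLev C d pid (m + 2) f := by
  induction m with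
  | zero =>
    intro hm f hf
    have := ent_step hC hpid hm (hloc 0 hm) hf
    rw [entLev_zero hC hpid] at this
    simpa [vOfS] using this
  | succ m ih =>
    intro hm f hf
    have hstep := ent_step hC hpid hm (hloc (m + 1) hm) hf
    have hih := ih (by omega) (avg C d pid (m + 1 + 1) 1 f)
      (fun S hS => avg_nonneg hC hpid (mem_faces.1 hS).1 hf)
    have hv := one_le_vOfS m (fun j hj => hs j (by omega))
    have hs1 := hs (m + 1) (by omega)
    have hv0 : 0 < vOfS s m := by linarith
    rw [mul_comm, ← le_div_iff₀ hv0] at hih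
    have hmul := mul_le_mul_of_nonneg_left hih (sub_nonneg.2 hs1)
    simp only [vOfS]
    calc _ = s (m + 1) * entLev C d pid (m + 1 + 1) (avg C d pid (m + 1 + 1) 1 f) -
          (s (m + 1) - 1) *
            (entLev C d pid (m + 2) (avg C d pid (m + 1 + 1) 1 f) / vOfS s m) := by ring
      _ ≤ _ := by linarith

end Contraction

/-- **Local-to-global entropy contraction.** If every link at level `k-2` satisfies the
local entropy contraction `Ent_{π_{S,2}}(g) ≥ s_{k-2} Ent_{π_{S,1}}(P_{S,1}^↑ g)` with
`s_j ≥ 1`, then globally `Ent_{π_k}(f) ≥ v_{k-2} Ent_{π_{k-1}}(P_{k-1}^↑ f)`. -/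
theorem local_to_global_entropy {E : Type*} [Fintype E] [DecidableEq E]
    (C : Finset (Finset E)) (d : ℕ) (pid : Finset E → ℝ)
(hC : IsPureComplex C d) (hpid : IsTopDist C d pid)
    (s : ℕ → ℝ) (hs : ∀ j ≤ d - 2, 1 ≤ s j)
    (hloc : ∀ k, 2 ≤ k → k ≤ d → ∀ S ∈ faces C (k-2), ∀ g : Finset E → ℝ,
      (∀ T ∈ linkFaces C S 2, 0 ≤ g T) →
      pEnt (linkPi C d pid S 2) (linkFaces C S 2) g ≥
        s (k-2) * pEnt (linkPi C d pid S 1) (linkFaces C S 1) (linkUp C d pid S 1 g))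
    (k : ℕ) (hk2 : 2 ≤ k) (hkd : k ≤ d)
    (f : Finset E → ℝ) (hf : ∀ S ∈ faces C k, 0 ≤ f S) :
    pEnt (piLev C d pid k) (faces C k) f ≥
      vOfS s (k-2) * pEnt (piLev C d pid (k-1)) (faces C (k-1)) (upOp C d pid (k-1) f) := by
  obtain ⟨m, rfl⟩ := Nat.exists_eq_add_of_le' hk2
  rw [show m + 2 - 1 = m + 1 by omega, show m + 2 - 2 = m by omega, pEnt_piLev hC,
    pEnt_piLev hC, entLev_congr fun S hS => upOp_eq hC hpid hkd f hS]
  exact entLev_contraction hC hpid hs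
    (fun m hm S hS => by simpa using hloc (m + 2) (by omega) hm S (by simpa using hS))
    m hkd f hf
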